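/- Let p ∈ ℤ and let q be a positive integer. For every ε > 0 there exists a constant C > 0 such that for all positive integers τ, K, L, the set A_{K,L}(τ) := {(k, l) ∈ ℕ² : K ≤ k < 2K, L ≤ l < 2L, and q·τ = q·(k(k+4))² + p·k(k+4) + q·(l(l+4))² + p·l(l+4)} has cardinality at most C·K^ε. -/

import Mathlib

theorem rcs_split (π : GaussianInt) (hπ : Prime π) (e : ℕ) :
    ∀ z : GaussianInt, (π.norm ^ e ∣ z.norm) →
      ∃ a ∈ Finset.range (e + 1), π ^ a * (star π) ^ (e - a) ∣ z := by
  induction e with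
  | zero => intro z _; exact ⟨0, by simp, by simp⟩
  | succ e ih =>
    intro z hz
    have hN : π.norm ≠ 0 := by
      rw [Ne, GaussianInt.norm_eq_zero]; exact hπ.ne_zero
    have h1 : π ∣ z * star z := by
      rw [← Zsqrtd.norm_eq_mul_conj]
      obtain ⟨c, hc⟩ := (dvd_pow_self π.norm (Nat.succ_ne_zero e)).trans hz
      rw [hc]
      push_cast
      rw [Zsqrtd.norm_eq_mul_conj, mul_assoc]
      exact dvd_mul_right _ _
    rcases hπ.dvd_or_dvd h1 with ⟨w, hw⟩ | h
    · have : π.norm ^ e ∣ w.norm := by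
        rw [hw, Zsqrtd.norm_mul, pow_succ'] at hz
        exact (mul_dvd_mul_iff_left hN).1 hz
      obtain ⟨a, ha, hd⟩ := ih w this
      rw [Finset.mem_range] at ha
      refine ⟨a + 1, by rw [Finset.mem_range]; omega, ?_⟩
      rw [hw, show e + 1 - (a + 1) = e - a by omega, pow_succ', mul_assoc]
      exact mul_dvd_mul_left _ hd
    · obtain ⟨v, hv⟩ := h
      have hw : z = star π * star v := by
        have := congrArg star hv
        rw [star_star, star_mul, mul_comm] at this
        exact this
      have : π.norm ^ e ∣ (star v).norm := by
        rw [hw, Zsqrtd.norm_mul, pow_succ', Zsqrtd.norm_conj π] at hz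
        exact (mul_dvd_mul_iff_left hN).1 hz
      obtain ⟨a, ha, hd⟩ := ih _ this
      rw [Finset.mem_range] at ha
      refine ⟨a, by rw [Finset.mem_range]; omega, ?_⟩
      rw [hw, show e + 1 - a = (e - a) + 1 by omega, pow_succ', mul_left_comm]
      exact mul_dvd_mul_left _ hd

theorem rcs_inert (p : ℕ) (hp : Prime (p : GaussianInt)) (m : ℤ) (hm : ¬ (p : ℤ) ∣ m) (e : ℕ) :
    ∀ z : GaussianInt, z.norm = (p : ℤ) ^ e * m →
      ∃ w : GaussianInt, z = (p : GaussianInt) ^ (e / 2) * w ∧ w.norm = m := by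
  induction e using Nat.strong_induction_on with
  | _ e ih =>
    intro z hz
    have hp0 : (p : ℤ) ≠ 0 := by
      intro h
      apply hp.ne_zero
      have : p = 0 := by exact_mod_cast h
      simp [this]
    rcases Nat.eq_zero_or_pos e with rfl | he
    · exact ⟨z, by simp, by simpa using hz⟩
    · have h1 : (p : GaussianInt) ∣ z * star z := by
        rw [← Zsqrtd.norm_eq_mul_conj, hz]
        push_cast
        exact (dvd_pow_self _ he.ne').mul_right _
      have h2 : (p : GaussianInt) ∣ z := by
        rcases hp.dvd_or_dvd h1 with h | ⟨v, hv⟩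
        · exact h
        · refine ⟨star v, ?_⟩
          have := congrArg star hv
          rw [star_star, star_mul, mul_comm, star_natCast] at this
          exact this
      obtain ⟨w, hw⟩ := h2
      rw [hw, Zsqrtd.norm_mul, Zsqrtd.norm_natCast] at hz
      have he2 : 2 ≤ e := by
        by_contra hlt
        have : e = 1 := by omega
        subst this
        apply hm
        refine ⟨w.norm, ?_⟩
        apply mul_left_cancel₀ hp0
        linarith
      obtain ⟨f, rfl⟩ : ∃ f, e = f + 2 := ⟨e - 2, by omega⟩
      have hz' : w.norm = (p : ℤ) ^ f * m := by
        apply mul_left_cancel₀ (mul_ne_zero hp0 hp0)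
        rw [hz]; ring
      obtain ⟨u, hu, hn⟩ := ih f (by omega) w hz'
      refine ⟨u, ?_, hn⟩
      rw [hw, hu, show (f + 2) / 2 = f / 2 + 1 by omega]
      ring

theorem rcs_prime (p : ℕ) (hp : p.Prime) (m : ℤ) (hm : ¬ (p : ℤ) ∣ m) (e : ℕ) :
    ∃ S : Finset GaussianInt, S.card ≤ e + 1 ∧
      ∀ z : GaussianInt, z.norm = (p : ℤ) ^ e * m → ∃ s ∈ S, ∃ w : GaussianInt,
        z = s * w ∧ w.norm = m := by
  classical
  have : Fact p.Prime := ⟨hp⟩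
  have hp0 : (p : ℤ) ≠ 0 := by exact_mod_cast hp.ne_zero
  by_cases h : Irreducible (p : GaussianInt)
  · refine ⟨{(p : GaussianInt) ^ (e / 2)}, by simp, ?_⟩
    intro z hz
    obtain ⟨w, h1, h2⟩ := rcs_inert p (irreducible_iff_prime.1 h) m hm e z hz
    exact ⟨_, by simp, w, h1, h2⟩
  · obtain ⟨a, b, hab⟩ := GaussianInt.sq_add_sq_of_nat_prime_of_not_irreducible p h
    set π : GaussianInt := ⟨a, b⟩ with hπd
    have hN : π.norm = p := by
      rw [Zsqrtd.norm_def, hπd, ← hab]; push_cast; ring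
    have hπ : Prime π := by
      rw [← irreducible_iff_prime]
      constructor
      · rw [← Zsqrtd.norm_eq_one_iff, hN]
        simpa using hp.ne_one
      · intro x y hxy
        rw [← Zsqrtd.norm_eq_one_iff, ← Zsqrtd.norm_eq_one_iff]
        have : x.norm.natAbs * y.norm.natAbs = p := by
          rw [← Int.natAbs_mul, ← Zsqrtd.norm_mul, ← hxy, hN]; simp
        have hi : Irreducible (x.norm.natAbs * y.norm.natAbs) := by rw [this]; exact hp
        simpa using hi.isUnit_or_isUnit rfl
    refine ⟨(Finset.range (e + 1)).image (fun a => π ^ a * (star π) ^ (e - a)), ?_, ?_⟩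
    · exact Finset.card_image_le.trans (by simp)
    · intro z hz
      obtain ⟨a, ha, w, hw⟩ := rcs_split π hπ e z (by rw [hN, hz]; exact dvd_mul_right _ _)
      refine ⟨_, Finset.mem_image_of_mem _ ha, w, hw, ?_⟩
      rw [Finset.mem_range] at ha
      have hs : (π ^ a * (star π) ^ (e - a)).norm = (p : ℤ) ^ e := by
        have hpow : ∀ (x : GaussianInt) (n : ℕ), (x ^ n).norm = x.norm ^ n :=
          fun x n => map_pow (Zsqrtd.normMonoidHom) x n
        rw [Zsqrtd.norm_mul, hpow, hpow, Zsqrtd.norm_conj, hN, ← pow_add]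
        congr 1; omega
      rw [hw, Zsqrtd.norm_mul, hs] at hz
      exact mul_left_cancel₀ (pow_ne_zero _ hp0) hz

theorem rcs_r2 (n : ℕ) : n ≠ 0 → ∃ T : Finset GaussianInt, T.card ≤ 4 * n.divisors.card ∧
    ∀ z : GaussianInt, z.norm = (n : ℤ) → z ∈ T := by
  classical
  induction n using Nat.recOnPrimePow with
  | zero => intro h; exact absurd rfl h
  | one =>
    intro _
    refine ⟨{⟨1, 0⟩, ⟨-1, 0⟩, ⟨0, 1⟩, ⟨0, -1⟩}, by decide, ?_⟩
    rintro ⟨x, y⟩ hz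
    rw [Zsqrtd.norm_def] at hz
    have hz' : x * x + y * y = 1 := by simpa using hz
    have hx : x ≤ 1 := by nlinarith
    have hx' : -1 ≤ x := by nlinarith
    have hy : y ≤ 1 := by nlinarith
    have hy' : -1 ≤ y := by nlinarith
    interval_cases x <;> interval_cases y <;> first | (exfalso; omega) | simp
  | prime_pow_mul a p e hp hpa he ih =>
    intro _
    have ha : a ≠ 0 := by rintro rfl; simp at hpa
    obtain ⟨T, hT, hTz⟩ := ih ha
    obtain ⟨S, hS, hSz⟩ := rcs_prime p hp (a : ℤ) (by exact_mod_cast hpa) e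
    refine ⟨Finset.image₂ (· * ·) S T, ?_, ?_⟩
    · have hc : (p ^ e).Coprime a := Nat.Coprime.pow_left _ ((Nat.Prime.coprime_iff_not_dvd hp).2 hpa)
      rw [hc.card_divisors_mul, Nat.divisors_prime_pow hp, Finset.card_map, Finset.card_range]
      calc _ ≤ S.card * T.card := Finset.card_image₂_le _ _ _
        _ ≤ (e + 1) * (4 * a.divisors.card) := Nat.mul_le_mul hS hT
        _ = _ := by ring
    · intro z hz
      obtain ⟨s, hs, w, hw, hn⟩ := hSz z (by rw [hz]; push_cast; ring)
      rw [hw]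
      exact Finset.mem_image₂_of_mem hs (hTz w hn)

theorem rcs_div (ε : ℝ) (hε : 0 < ε) : ∃ C : ℝ, 0 < C ∧ ∀ n : ℕ, n ≠ 0 →
    (n.divisors.card : ℝ) ≤ C * (n : ℝ) ^ ε := by
  obtain ⟨B, hB⟩ := exists_nat_ge ((2 : ℝ) ^ (1 / ε))
  have hl : 0 < ε * Real.log 2 := mul_pos hε (Real.log_pos (by norm_num))
  set M : ℝ := 1 + 1 / (ε * Real.log 2) with hM
  have hM1 : 1 ≤ M := by
    have : 0 < 1 / (ε * Real.log 2) := by positivity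
    linarith
  refine ⟨M ^ B, by positivity, ?_⟩
  intro n hn
  have key : ∀ p : ℕ, p.Prime → ∀ e : ℕ,
      ((e + 1 : ℕ) : ℝ) ≤ (if p < B then M else 1) * ((p : ℝ) ^ e) ^ ε := by
    intro p hp e
    have hp2 : (2 : ℝ) ≤ p := by exact_mod_cast hp.two_le
    have hcomm : ((p : ℝ) ^ e) ^ ε = ((p : ℝ) ^ ε) ^ e := by
      rw [← Real.rpow_natCast, ← Real.rpow_natCast, ← Real.rpow_mul (by positivity),
        ← Real.rpow_mul (by positivity), mul_comm]
    split_ifs with h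
    · have h1 : (1 : ℝ) + e * (ε * Real.log 2) ≤ ((p : ℝ) ^ e) ^ ε := by
        calc (1 : ℝ) + e * (ε * Real.log 2) ≤ Real.exp (e * (ε * Real.log 2)) := by
              linarith [Real.add_one_le_exp (e * (ε * Real.log 2))]
          _ = ((2 : ℝ) ^ e) ^ ε := by
              rw [← Real.rpow_natCast, ← Real.rpow_mul (by norm_num),
                Real.rpow_def_of_pos (by norm_num)]
              congr 1; ring
          _ ≤ _ := by gcongr
      calc ((e + 1 : ℕ) : ℝ) ≤ M * (1 + e * (ε * Real.log 2)) := by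
            have h2 : M * (1 + e * (ε * Real.log 2))
                = M + e * (ε * Real.log 2) + e := by
              rw [hM]; field_simp; ring
            rw [h2]; push_cast
            have : 0 ≤ (e : ℝ) * (ε * Real.log 2) := by positivity
            linarith
        _ ≤ _ := by gcongr
    · have hBp : (2 : ℝ) ^ (1 / ε) ≤ p := hB.trans (by exact_mod_cast not_lt.1 h)
      have h2 : (2 : ℝ) ≤ (p : ℝ) ^ ε := by
        calc (2 : ℝ) = ((2 : ℝ) ^ (1 / ε)) ^ ε := by
              rw [← Real.rpow_mul (by norm_num), one_div_mul_cancel hε.ne', Real.rpow_one]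
          _ ≤ _ := by gcongr
      rw [one_mul, hcomm]
      calc ((e + 1 : ℕ) : ℝ) ≤ (2 : ℝ) ^ e := by exact_mod_cast Nat.lt_two_pow_self
        _ ≤ _ := by gcongr
  rw [Nat.card_divisors hn, Nat.cast_prod]
  calc ∏ p ∈ n.primeFactors, ((n.factorization p + 1 : ℕ) : ℝ)
      ≤ ∏ p ∈ n.primeFactors,
          ((if p < B then M else 1) * ((p : ℝ) ^ (n.factorization p)) ^ ε) :=
        Finset.prod_le_prod (fun _ _ => by positivity)
          (fun p hp => key p (Nat.prime_of_mem_primeFactors hp) _)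
    _ = (∏ p ∈ n.primeFactors, (if p < B then M else 1)) * (n : ℝ) ^ ε := by
        rw [Finset.prod_mul_distrib, Real.finsetProd_rpow _ _ (fun _ _ => by positivity)]
        congr 2
        have := Nat.prod_factorization_pow_eq_self hn
        conv_rhs => rw [← this]
        rw [Finsupp.prod, Nat.support_factorization]
        push_cast; rfl
    _ ≤ _ := by
        gcongr
        rw [← Finset.prod_filter, Finset.prod_const]
        apply pow_le_pow_right₀ hM1
        calc _ ≤ (Finset.range B).card := Finset.card_le_card (by
              intro p hp
              simp only [Finset.mem_filter] at hp
              simpa using hp.2)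
          _ = B := by simp

/-- uniqueness of `l` when `L` is large. -/
theorem rcs_uniq (p q K L E x x' y y' : ℤ) (hq : 1 ≤ q) (hK : 1 ≤ K)
    (hE : E = 24 * q + |p|) (hL : 12 * E * K ^ 2 < L)
    (hx0 : 0 ≤ x) (hx : x ≤ 12 * K ^ 2) (hx0' : 0 ≤ x') (hx' : x' ≤ 12 * K ^ 2)
    (hy : L ^ 2 ≤ y) (hyy : y < y')
    (h : q * x ^ 2 + p * x + q * y ^ 2 + p * y = q * x' ^ 2 + p * x' + q * y' ^ 2 + p * y') :
    False := by
  have hp1 := neg_abs_le p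
  have hp2 := le_abs_self p
  have hp0 := abs_nonneg p
  generalize |p| = r at *
  have hK2 : 1 ≤ K ^ 2 := one_le_pow₀ hK
  generalize K ^ 2 = k at *
  have h1 : (q * (y' + y) + p) * (y' - y) = (q * (x + x') + p) * (x - x') := by linarith
  have hE24 : 24 ≤ E := by linarith
  have hEk : E * 1 ≤ E * k := by gcongr
  have hL2 : (12 * (E * k)) * (12 * (E * k)) ≤ L ^ 2 := by nlinarith
  have hrhs : (q * (x + x') + p) * (x - x') ≤ (E * k) * (12 * k) := by
    have ha : |q * (x + x') + p| ≤ E * k := by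
      have t1 : q * (x + x') ≤ q * (24 * k) := by gcongr; linarith
      have t0 : 0 ≤ q * (x + x') := by positivity
      have t2 : r * 1 ≤ r * k := by gcongr
      have t3 : E * k = q * (24 * k) + r * k := by rw [hE]; ring
      have t4 : 0 ≤ q * (24 * k) := by positivity
      rw [abs_le]; constructor <;> linarith
    have hb : |x - x'| ≤ 12 * k := by rw [abs_le]; constructor <;> linarith
    calc _ ≤ |(q * (x + x') + p) * (x - x')| := le_abs_self _
      _ = |q * (x + x') + p| * |x - x'| := abs_mul _ _
      _ ≤ _ := by gcongr
  have hlhs : L ^ 2 ≤ (q * (y' + y) + p) * (y' - y) := by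
    have t1 : 1 * (2 * L ^ 2) ≤ q * (y' + y) := by gcongr; linarith
    have t2 : r ≤ L ^ 2 := by nlinarith
    have t3 : L ^ 2 ≤ q * (y' + y) + p := by linarith
    have : 0 ≤ L ^ 2 := sq_nonneg L
    nlinarith
  have hk : (E * k) * (12 * k) < (12 * (E * k)) * (12 * (E * k)) := by
    have : k < 12 * (E * k) := by nlinarith
    have : 0 < 12 * (E * k) := by linarith
    nlinarith
  linarith

theorem rcs_bound (p q k K E : ℤ) (hq : 1 ≤ q) (hk0 : 0 ≤ k) (hK : 1 ≤ K)
    (hk : k < 2 * K) (hE : E = 24 * q + |p|) :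
    (2 * q * (k * (k + 4)) + p) ^ 2 ≤ (E * K ^ 2) ^ 2 := by
  have h12 : k * (k + 4) ≤ 12 * K ^ 2 := by nlinarith
  have h0 : 0 ≤ k * (k + 4) := by positivity
  have hp1 := neg_abs_le p
  have hp2 := le_abs_self p
  have hp0 := abs_nonneg p
  have hK2 : 1 ≤ K ^ 2 := one_le_pow₀ hK
  generalize |p| = r at *
  apply sq_le_sq'
  · have : 0 ≤ q * (k * (k + 4)) := by positivity
    have : 0 ≤ q * K ^ 2 := by positivity
    rw [hE]; nlinarith
  · have : q * (k * (k + 4)) ≤ q * (12 * K ^ 2) := by gcongr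
    rw [hE]; nlinarith

theorem rcs_up (k K : ℤ) (h0 : 0 ≤ k) (hK : 1 ≤ K) (h : k < 2 * K) :
    k * (k + 4) ≤ 12 * K ^ 2 := by nlinarith

theorem rcs_low (l L : ℤ) (hL : 1 ≤ L) (h : L ≤ l) : L ^ 2 ≤ l * (l + 4) := by nlinarith

theorem rcs_mono (l l' : ℤ) (h0 : 0 ≤ l) (h : l < l') : l * (l + 4) < l' * (l' + 4) := by
  nlinarith


/-- Counting bound for the resonance set `A_{K,L}(τ)` on the sphere `S⁵`:
for `β = p/q` rational, the set of pairs `(k, l)` in the dyadic ranges `[K, 2K) × [L, 2L)`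
with `τ = λ_k⁴ + λ_l⁴` (after clearing the denominator `q`, where
`λ_k⁴ = (k(k+4))² + (p/q)·k(k+4)`) has cardinality at most `C · K ^ ε`. -/
theorem resonance_count_sphere (p : ℤ) (q : ℕ) (hq : 0 < q) :
    ∀ ε : ℝ, 0 < ε → ∃ C : ℝ, 0 < C ∧ ∀ τ K L : ℕ, 0 < τ → 0 < K → 0 < L →
      (({kl : ℕ × ℕ | K ≤ kl.1 ∧ kl.1 < 2 * K ∧ L ≤ kl.2 ∧ kl.2 < 2 * L ∧
          (q : ℤ) * (τ : ℤ) =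
            (q : ℤ) * ((kl.1 : ℤ) * ((kl.1 : ℤ) + 4)) ^ 2 + p * ((kl.1 : ℤ) * ((kl.1 : ℤ) + 4))
            + (q : ℤ) * ((kl.2 : ℤ) * ((kl.2 : ℤ) + 4)) ^ 2
            + p * ((kl.2 : ℤ) * ((kl.2 : ℤ) + 4))} : Set (ℕ × ℕ)).ncard : ℝ)
        ≤ C * (K : ℝ) ^ ε := by

  intro ε hε
  obtain ⟨C₀, hC₀, hdiv⟩ := rcs_div (ε / 8) (by positivity)
  set E : ℕ := 24 * q + p.natAbs with hEdef
  set D : ℕ := 12 * E with hD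
  have hEZ : (E : ℤ) = 24 * (q : ℤ) + |p| := by rw [hEdef]; push_cast; rfl
  have hqZ : (1 : ℤ) ≤ q := by exact_mod_cast hq
  have hE24 : 24 ≤ E := by omega
  set C₁ : ℝ := 4 * C₀ * ((2 * E ^ 2 * D ^ 4 : ℕ) : ℝ) ^ (ε / 8) with hC₁
  have hC₁0 : 0 ≤ C₁ := by positivity
  refine ⟨2 + C₁, by positivity, ?_⟩
  intro τ K L hτ hK hL
  have hKZ : (1 : ℤ) ≤ K := by exact_mod_cast hK
  have hLZ : (1 : ℤ) ≤ L := by exact_mod_cast hL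
  set A : Set (ℕ × ℕ) := {kl : ℕ × ℕ | K ≤ kl.1 ∧ kl.1 < 2 * K ∧ L ≤ kl.2 ∧ kl.2 < 2 * L ∧
          (q : ℤ) * (τ : ℤ) =
            (q : ℤ) * ((kl.1 : ℤ) * ((kl.1 : ℤ) + 4)) ^ 2 + p * ((kl.1 : ℤ) * ((kl.1 : ℤ) + 4))
            + (q : ℤ) * ((kl.2 : ℤ) * ((kl.2 : ℤ) + 4)) ^ 2
            + p * ((kl.2 : ℤ) * ((kl.2 : ℤ) + 4))} with hA
  have hKε : (1 : ℝ) ≤ (K : ℝ) ^ ε := Real.one_le_rpow (by exact_mod_cast hK) hε.le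
  have hinj : ∀ a b : ℕ, (a : ℤ) * (a + 4) = (b : ℤ) * (b + 4) → a = b := by
    intro a b h
    have h' : ((a : ℤ) - b) * (a + b + 4) = 0 := by linarith
    rcases mul_eq_zero.1 h' with h | h <;> omega
  by_cases hcase : D * K ^ 2 < L
  · have hle : A.ncard ≤ 2 := by
      have hlt : ∀ a b : ℕ × ℕ, a ∈ A → b ∈ A → ¬ a.2 < b.2 := by
        rintro ⟨k, l⟩ ⟨k', l'⟩ ⟨ha1, ha2, ha3, ha4, ha5⟩ ⟨hb1, hb2, hb3, hb4, hb5⟩ hlt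
        simp only at *
        zify at ha2 ha3 ha4 hb2 hb3 hb4 hlt hcase
        refine rcs_uniq p q K L E ((k : ℤ) * (k + 4)) ((k' : ℤ) * (k' + 4)) ((l : ℤ) * (l + 4))
          ((l' : ℤ) * (l' + 4)) hqZ hKZ hEZ ?_ (by positivity)
          (rcs_up _ _ (by positivity) hKZ ha2) (by positivity)
          (rcs_up _ _ (by positivity) hKZ hb2) (rcs_low _ _ hLZ ha3)
          (rcs_mono _ _ (by positivity) hlt) (ha5.symm.trans hb5 |> fun h => by linarith only [h])
        rw [hD] at hcase; push_cast at hcase; exact hcase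
      have heq : ∀ a b : ℕ × ℕ, a ∈ A → b ∈ A → a.2 = b.2 := fun a b ha hb =>
        le_antisymm (not_lt.1 (hlt b a hb ha)) (not_lt.1 (hlt a b ha hb))
      have hsum : ∀ a b : ℕ × ℕ, a ∈ A → b ∈ A → a ≠ b →
          (q : ℤ) * ((a.1 : ℤ) * (a.1 + 4) + (b.1 : ℤ) * (b.1 + 4)) + p = 0 := by
        intro a b ha hb hab
        have h2 := heq a b ha hb
        have h1 : (a.1 : ℤ) * (a.1 + 4) - (b.1 : ℤ) * (b.1 + 4) ≠ 0 := by
          intro h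
          exact hab (Prod.ext (hinj _ _ (sub_eq_zero.1 h)) h2)
        have ea := ha.2.2.2.2
        have eb := hb.2.2.2.2
        rw [h2] at ea
        apply mul_right_cancel₀ h1
        linarith
      by_contra hlt2
      have hfin : A.Finite := Set.finite_of_ncard_pos (by omega)
      obtain ⟨a, b, c, ha, hb, hc, hab, hac, hbc⟩ :=
        (Set.two_lt_ncard_iff hfin).1 (not_le.1 hlt2)
      have h1 := hsum a b ha hb hab
      have h2 := hsum a c ha hc hac
      apply hbc
      refine Prod.ext (hinj _ _ ?_) (heq b c hb hc)
      apply mul_left_cancel₀ (show (q : ℤ) ≠ 0 by omega)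
      linarith
    have : (A.ncard : ℝ) ≤ 2 := by exact_mod_cast hle
    calc (A.ncard : ℝ) ≤ 2 * 1 := by linarith only [this]
      _ ≤ (2 + C₁) * (K : ℝ) ^ ε := by gcongr; linarith only [hC₁0]
  · rw [not_lt] at hcase
    rcases A.eq_empty_or_nonempty with hemp | ⟨a, ha⟩
    · rw [hemp]; simp; positivity
    set n : ℕ := 4 * q ^ 2 * τ + 2 * p.natAbs ^ 2 with hn
    have hnZ : (n : ℤ) = 4 * (q : ℤ) ^ 2 * τ + 2 * p ^ 2 := by
      rw [hn]; push_cast; rw [sq_abs]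
    have hn0 : n ≠ 0 := by positivity
    have hnorm : ∀ a ∈ A, (2 * (q : ℤ) * ((a.1 : ℤ) * (a.1 + 4)) + p) ^ 2
        + (2 * (q : ℤ) * ((a.2 : ℤ) * (a.2 + 4)) + p) ^ 2 = n := by
      intro a ha
      have e := ha.2.2.2.2
      rw [hnZ]
      linear_combination (-4 * (q : ℤ)) * e
    have hnle : n ≤ 2 * E ^ 2 * D ^ 4 * K ^ 8 := by
      have h := hnorm a ha
      obtain ⟨ha1, ha2, ha3, ha4, -⟩ := ha
      have b1 := rcs_bound p q a.1 K E hqZ (by positivity) hKZ (by exact_mod_cast ha2) hEZ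
      have b2 := rcs_bound p q a.2 L E hqZ (by positivity) hLZ (by exact_mod_cast ha4) hEZ
      have hm : (n : ℤ) ≤ (E * K ^ 2) ^ 2 + (E * L ^ 2) ^ 2 := by linarith
      have hm' : n ≤ (E * K ^ 2) ^ 2 + (E * L ^ 2) ^ 2 := by exact_mod_cast hm
      have hKK : K ^ 4 ≤ D ^ 4 * K ^ 8 := by
        have h1 : 1 ≤ D ^ 4 := Nat.one_le_pow _ _ (by omega)
        have h2 : K ^ 4 ≤ K ^ 8 := Nat.pow_le_pow_right hK (by norm_num)
        exact h2.trans (Nat.le_mul_of_pos_left _ h1)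
      have hLL : L ^ 4 ≤ D ^ 4 * K ^ 8 := by
        calc L ^ 4 ≤ (D * K ^ 2) ^ 4 := by gcongr
          _ = _ := by ring
      calc n ≤ (E * K ^ 2) ^ 2 + (E * L ^ 2) ^ 2 := hm'
        _ = E ^ 2 * K ^ 4 + E ^ 2 * L ^ 4 := by ring
        _ ≤ E ^ 2 * (D ^ 4 * K ^ 8) + E ^ 2 * (D ^ 4 * K ^ 8) := by gcongr
        _ = _ := by ring
    obtain ⟨T, hT, hTz⟩ := rcs_r2 n hn0
    have hAT : A.ncard ≤ T.card := by
      rw [← Set.ncard_coe_finset]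
      refine Set.ncard_le_ncard_of_injOn
        (fun a => (⟨2 * (q : ℤ) * ((a.1 : ℤ) * (a.1 + 4)) + p,
          2 * (q : ℤ) * ((a.2 : ℤ) * (a.2 + 4)) + p⟩ : GaussianInt)) ?_ ?_ (Finset.finite_toSet T)
      · intro a ha
        apply hTz
        rw [Zsqrtd.norm_def, ← hnorm a ha]
        ring
      · intro a ha b hb hab
        have hab' := Zsqrtd.ext_iff.1 hab
        simp only at hab'
        have hq2 : (2 * (q : ℤ)) ≠ 0 := by omega
        exact Prod.ext (hinj _ _ (mul_left_cancel₀ hq2 (by linarith [hab'.1])))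
          (hinj _ _ (mul_left_cancel₀ hq2 (by linarith [hab'.2])))
    have h1 : (A.ncard : ℝ) ≤ 4 * (n.divisors.card : ℝ) := by exact_mod_cast hAT.trans hT
    have h2 := hdiv n hn0
    have h3 : (n : ℝ) ^ (ε / 8) ≤ ((2 * E ^ 2 * D ^ 4 : ℕ) : ℝ) ^ (ε / 8) * (K : ℝ) ^ ε := by
      calc (n : ℝ) ^ (ε / 8) ≤ (((2 * E ^ 2 * D ^ 4 : ℕ) : ℝ) * (K : ℝ) ^ 8) ^ (ε / 8) := by
            apply Real.rpow_le_rpow (by positivity) _ (by positivity)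
            exact_mod_cast hnle
        _ = _ := by
            rw [Real.mul_rpow (by positivity) (by positivity), ← Real.rpow_natCast (K : ℝ) 8,
              ← Real.rpow_mul (by positivity)]
            congr 2; push_cast; ring
    calc (A.ncard : ℝ) ≤ 4 * (n.divisors.card : ℝ) := h1
      _ ≤ 4 * (C₀ * (((2 * E ^ 2 * D ^ 4 : ℕ) : ℝ) ^ (ε / 8) * (K : ℝ) ^ ε)) := by
          gcongr
          exact h2.trans (by gcongr)
      _ = C₁ * (K : ℝ) ^ ε := by rw [hC₁]; ring
      _ ≤ (2 + C₁) * (K : ℝ) ^ ε := by gcongr; linarith
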